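/- arXiv:1402.6974 — 3 statements merged into one kernel-verified Lean document; each statement's English description precedes it below -/
import Mathlib

section
/- Let G be a finitely generated group with finite generating set S, let H ≤ G be a subgroup of finite index, let Γ be a finite simplicial graph, and suppose there is an injective group homomorphism φ : H → A_Γ into the right-angled Artin group on Γ. Then the residual finiteness growth of G is at most linear: there exists C > 0 such that for every n ≥ 1 and every g ∈ G with g ≠ 1 and ‖g‖_S ≤ n, there exists a subgroup B ≤ G with g ∉ B and [G : B] ≤ C·n. -/
/-! A right-angled Artin group moves a point under an action on at most `n + 1` points, for every
nontrivial element of length `n`; this gives linear residual finiteness growth, and linear growth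
passes to subgroups and to finite-index overgroups.

The action comes from a chain in the heap of a shortest word `w` for the element. Read `w` from
right to left and keep a list of letters, starting from the empty list: a letter is recorded unless it
is adjacent in `Γ` to (hence commutes with) the letter recorded last (`raagChain`). Consecutive
recorded letters are not adjacent, and they are not inverse to each other because `w` is shortest
(`raagChain_isChain`). So the chain `c` is a non-backtracking labelled path whose vertices are the
suffixes of `c`. Each generator `v` acts as a partial injection along the edges labelled `v`, and
this extends to a permutation fixing every vertex not touched by a `v`-edge. Edges with adjacent
labels share no vertex, so the permutations of adjacent generators have disjoint supports and
commute: the group acts on the vertices of the path (`exists_raag_action`). Reading `w` from the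
initial vertex, recorded letters advance along the path and the other ones fix the current vertex,
so the element sends the initial vertex to the final one (`raag_linear`).

For the passage from `H` to `G`, a Reidemeister–Schreier rewriting shows that the image of `h ∈ H`
in the Artin group has length at most a constant times the length of `h` in `G`
(`exists_length_bound`). -/

/-- The word length of `g` with respect to a generating set `S`: the least `n`
such that `g` is a product of `n` elements of `S ∪ S⁻¹`. -/
noncomputable def wordLength {G : Type*} [Group G] (S : Set G) (g : G) : ℕ :=
  sInf {n | ∃ l : List G, l.length = n ∧ (∀ x ∈ l, x ∈ S ∪ S⁻¹) ∧ l.prod = g}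

/-- The defining relators of the right-angled Artin group on a simplicial graph `Γ`:
commutators of adjacent vertices. -/
def raagRels {V : Type*} (Γ : SimpleGraph V) : Set (FreeGroup V) :=
  {r | ∃ x y : V, Γ.Adj x y ∧
    r = FreeGroup.of x * FreeGroup.of y * (FreeGroup.of x)⁻¹ * (FreeGroup.of y)⁻¹}

/-- The right-angled Artin group on a simplicial graph `Γ`. -/
abbrev RAAG {V : Type*} (Γ : SimpleGraph V) := PresentedGroup (raagRels Γ)

/-! ### Extending partial injections -/

open scoped Classical in
/-- A partial injection of a finite type, given as a relation, extends to a permutation. -/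
theorem exists_perm_extend {α : Type*} [Finite α] (R : α → α → Prop)
    (hf : ∀ a b b', R a b → R a b' → b = b') (hi : ∀ a a' b, R a b → R a' b → a = a') :
    ∃ σ : Equiv.Perm α, ∀ a b, R a b → σ a = b := by
  have := Fintype.ofFinite α
  let s : Finset α := Finset.univ.filter fun a => ∃ b, R a b
  let f : α → α := fun a => if h : ∃ b, R a b then h.choose else a
  have hfR : ∀ a, (∃ b, R a b) → R a (f a) := by
    intro a h
    simp only [f, dif_pos h]
    exact h.choose_spec
  have hinj : Set.InjOn f s := by
    intro a ha a' ha' h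
    have h1 := hfR a (by simpa [s] using ha)
    have h2 := hfR a' (by simpa [s] using ha')
    rw [← h] at h2
    exact hi _ _ _ h1 h2
  obtain ⟨g, hg⟩ := Finset.exists_equiv_extend_of_card_eq (t := (Finset.univ : Finset α))
    (by simp) (Finset.subset_univ (s.image f)) hinj
  refine ⟨g.trans (Equiv.subtypeUnivEquiv (by simp)), fun a b hab => ?_⟩
  have h1 := hg a (by simpa [s] using ⟨b, hab⟩)
  simp only [Equiv.trans_apply, Equiv.subtypeUnivEquiv_apply]
  rw [h1]
  exact hf _ _ _ (hfR a ⟨b, hab⟩) hab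

/-! ### Words and chains in right-angled Artin groups -/

section RAAGWords

variable {V : Type*} (Γ : SimpleGraph V)

/-- The element of the right-angled Artin group given by a signed generator; `true` is the
positive sign, as in `FreeGroup`. -/
def raagLetter (x : V × Bool) : RAAG Γ :=
  bif x.2 then PresentedGroup.of x.1 else (PresentedGroup.of x.1)⁻¹

/-- The element of the right-angled Artin group represented by a word. -/
def raagEval (l : List (V × Bool)) : RAAG Γ := (l.map (raagLetter Γ)).prod

/-- A word of minimal length among those representing the same element. -/
def RAAGShortest (l : List (V × Bool)) : Prop :=
  ∀ l', raagEval Γ l' = raagEval Γ l → l.length ≤ l'.length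

open scoped Classical in
/-- The chain recorded when the word is read from right to left: a letter is put in front of the
chain unless it is adjacent to the current head. The reading direction matches left actions, where
the last letter acts first. -/
noncomputable def raagChain : List (V × Bool) → List (V × Bool)
  | [] => []
  | x :: l =>
    match raagChain l with
    | [] => [x]
    | y :: c => if Γ.Adj x.1 y.1 then y :: c else x :: y :: c

/-- Two letters may be consecutive in a chain if they are neither adjacent nor mutually inverse. -/
def ChainRel (x y : V × Bool) : Prop := ¬ Γ.Adj x.1 y.1 ∧ (x.1 = y.1 → x.2 = y.2)

@[simp] theorem raagEval_nil : raagEval Γ [] = 1 := rfl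

theorem raagEval_cons (x : V × Bool) (l) : raagEval Γ (x :: l) = raagLetter Γ x * raagEval Γ l := by
  simp [raagEval]

theorem raagEval_append (l l') : raagEval Γ (l ++ l') = raagEval Γ l * raagEval Γ l' := by
  simp [raagEval]

theorem raagEval_surjective : Function.Surjective (raagEval Γ) := by
  intro x
  classical
  obtain ⟨y, rfl⟩ := QuotientGroup.mk_surjective x
  refine ⟨y.toWord, ?_⟩
  have key : ∀ l : List (V × Bool),
      raagEval Γ l = PresentedGroup.mk (raagRels Γ) (FreeGroup.mk l) := by
    intro l
    induction l with
    | nil => exact (map_one (PresentedGroup.mk (raagRels Γ))).symm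
    | cons x l ih =>
      have h : FreeGroup.mk (x :: l) = FreeGroup.mk [x] * FreeGroup.mk l := by
        rw [FreeGroup.mul_mk]; rfl
      rw [raagEval_cons, ih, h, map_mul]
      congr 1
      obtain ⟨v, b⟩ := x
      cases b
      · have h' : (FreeGroup.mk [(v, false)]) = (FreeGroup.of v)⁻¹ := by
          simp [FreeGroup.of, FreeGroup.inv_mk, FreeGroup.invRev]
        rw [h', map_inv]; rfl
      · rfl
  rw [key, FreeGroup.mk_toWord]
  rfl

theorem commute_of_adj {v w : V} (h : Γ.Adj v w) :
    Commute (PresentedGroup.of v : RAAG Γ) (PresentedGroup.of w) := by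
  have h1 : PresentedGroup.mk (raagRels Γ) (FreeGroup.of v * FreeGroup.of w *
      (FreeGroup.of v)⁻¹ * (FreeGroup.of w)⁻¹) = 1 :=
    PresentedGroup.one_of_mem ⟨v, w, h, rfl⟩
  rw [map_mul, map_mul, map_mul, map_inv, map_inv, mul_inv_eq_one, mul_inv_eq_iff_eq_mul] at h1
  exact h1

theorem raagLetter_commute {x y : V × Bool} (h : Γ.Adj x.1 y.1) :
    Commute (raagLetter Γ x) (raagLetter Γ y) := by
  have := commute_of_adj Γ h
  obtain ⟨v, b⟩ := x
  obtain ⟨w, b'⟩ := y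
  cases b <;> cases b' <;> simpa [raagLetter] using this

theorem raagLetter_mul_inv {x y : V × Bool} (h : x.1 = y.1) (h' : x.2 ≠ y.2) :
    raagLetter Γ x * raagLetter Γ y = 1 := by
  obtain ⟨v, b⟩ := x
  obtain ⟨w, b'⟩ := y
  obtain rfl : v = w := h
  cases b <;> cases b' <;> simp_all [raagLetter]

/-- The head of the chain is a letter of the word that can be moved to the front. -/
theorem raagChain_head (l : List (V × Bool)) (y c) (h : raagChain Γ l = y :: c) :
    ∃ l', l.length = l'.length + 1 ∧ raagEval Γ l = raagLetter Γ y * raagEval Γ l' := by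
  induction l generalizing y c with
  | nil => simp [raagChain] at h
  | cons x l ih =>
    rw [raagChain] at h
    rcases hc : raagChain Γ l with _ | ⟨z, d⟩
    · simp only [hc, List.cons.injEq] at h
      exact ⟨l, rfl, by rw [raagEval_cons, h.1]⟩
    · simp only [hc] at h
      split_ifs at h with hadj
      · obtain ⟨rfl, rfl⟩ := List.cons.inj h
        obtain ⟨l', h1, h2⟩ := ih z d hc
        refine ⟨x :: l', by simp [h1], ?_⟩
        rw [raagEval_cons, raagEval_cons, h2, ← mul_assoc, ← mul_assoc,
          (raagLetter_commute Γ hadj).eq]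
      · exact ⟨l, rfl, by rw [raagEval_cons, (List.cons.inj h).1]⟩

theorem RAAGShortest.tail {x : V × Bool} {l} (h : RAAGShortest Γ (x :: l)) :
    RAAGShortest Γ l := by
  intro l' hl'
  have := h (x :: l') (by rw [raagEval_cons, raagEval_cons, hl'])
  simpa using this

/-- A cancelling pair in the chain would give a shorter word for the same element. -/
theorem raagChain_isChain (l : List (V × Bool)) (h : RAAGShortest Γ l) :
    (raagChain Γ l).IsChain (ChainRel Γ) := by
  induction l with
  | nil => simp [raagChain]
  | cons x l ih =>
    have ih := ih h.tail
    rw [raagChain]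
    rcases hc : raagChain Γ l with _ | ⟨z, d⟩
    · simp
    · rw [hc] at ih
      simp only
      split_ifs with hadj
      · exact ih
      · refine List.isChain_cons_cons.2 ⟨⟨hadj, fun h1 => ?_⟩, ih⟩
        by_contra h2
        obtain ⟨l', h3, h4⟩ := raagChain_head Γ l z d hc
        have := h l' (by rw [raagEval_cons, h4, ← mul_assoc, raagLetter_mul_inv Γ h1 h2, one_mul])
        simp only [List.length_cons] at this
        omega

theorem raagChain_length_le (l : List (V × Bool)) : (raagChain Γ l).length ≤ l.length := by
  induction l with
  | nil => simp [raagChain]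
  | cons x l ih =>
    rw [raagChain]
    rcases hc : raagChain Γ l with _ | ⟨z, d⟩
    · simp
    · rw [hc] at ih
      simp only
      split_ifs <;> simp at ih ⊢ <;> omega

theorem raagChain_suffix (x : V × Bool) (l) : raagChain Γ l <:+ raagChain Γ (x :: l) := by
  rw [raagChain]
  rcases hc : raagChain Γ l with _ | ⟨z, d⟩
  · simp
  · simp only
    split_ifs
    · exact List.suffix_refl _
    · exact List.suffix_cons _ _

theorem raagChain_cons_ne_nil (x : V × Bool) (l) : raagChain Γ (x :: l) ≠ [] := by
  rw [raagChain]
  rcases hc : raagChain Γ l with _ | ⟨z, d⟩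
  · simp
  · simp only
    split_ifs <;> simp

/-! ### The action on the vertices of a chain -/

/-- The vertex `s` of the path with vertex set the suffixes of `c` is an endpoint of an edge
labelled `v`. -/
def Touches (c : List (V × Bool)) (v : V) (s : List (V × Bool)) : Prop :=
  (∃ b t, s = (v, b) :: t) ∨ ∃ b, (v, b) :: s <:+ c

variable {Γ}

theorem chainRel_of_suffix {c : List (V × Bool)} (hc : c.IsChain (ChainRel Γ)) {x y s}
    (h : x :: y :: s <:+ c) : ChainRel Γ x y :=
  (List.isChain_cons_cons.1 (hc.suffix h)).1

/-- Edges with adjacent labels share no vertex. -/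
theorem not_touches_of_adj {c : List (V × Bool)} (hc : c.IsChain (ChainRel Γ)) {v w : V}
    (hvw : Γ.Adj v w) {s} (hs : s <:+ c) (hv : Touches c v s) : ¬ Touches c w s := by
  rintro hw
  rcases hv with ⟨b, t, rfl⟩ | ⟨b, hv⟩ <;> rcases hw with ⟨b', t', hw⟩ | ⟨b', hw⟩
  · simp only [List.cons.injEq, Prod.mk.injEq] at hw
    exact hvw.ne hw.1.1
  · exact (chainRel_of_suffix hc hw).1 hvw.symm
  · subst hw
    exact (chainRel_of_suffix hc hv).1 hvw
  · have := (List.suffix_of_suffix_length_le hv hw (by simp)).eq_of_length (by simp)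
    simp only [List.cons.injEq, Prod.mk.injEq] at this
    exact hvw.ne this.1.1

/-- A generator permutes the vertices of a chain, following its own edges and fixing the vertices
it does not touch. -/
theorem exists_gen_perm {c : List (V × Bool)} (hc : c.IsChain (ChainRel Γ)) (v : V) :
    ∃ σ : Equiv.Perm {s // s <:+ c},
      (∀ s t : {s // s <:+ c}, t.1 = (v, true) :: s.1 → σ s = t) ∧
      (∀ s t : {s // s <:+ c}, s.1 = (v, false) :: t.1 → σ s = t) ∧
      ∀ s : {s // s <:+ c}, ¬ Touches c v s.1 → σ s = s := by
  have hfin : Finite {s // s <:+ c} := by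
    have := List.finite_toSet c.tails
    simp only [List.mem_tails] at this
    exact this
  -- Including the identity off the touched vertices in the relation forces the fixed points.
  obtain ⟨σ, hσ⟩ := exists_perm_extend (α := {s // s <:+ c})
    (fun s t => t.1 = (v, true) :: s.1 ∨ s.1 = (v, false) :: t.1 ∨ (s = t ∧ ¬ Touches c v s.1))
    (by
      rintro ⟨a, ha⟩ ⟨b, hb⟩ ⟨b', hb'⟩ h1 h2
      simp only [Subtype.mk.injEq] at h1 h2 ⊢
      rcases h1 with rfl | rfl | ⟨rfl, h1⟩ <;> rcases h2 with rfl | h2 | ⟨rfl, h2⟩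
      · rfl
      · subst h2
        have := (chainRel_of_suffix hc hb).2 rfl
        simp at this
      · exact absurd (Or.inr ⟨_, hb⟩) h2
      · have := (chainRel_of_suffix hc hb').2 rfl
        simp at this
      · simpa using h2
      · exact absurd (Or.inl ⟨_, _, rfl⟩) h2
      · exact absurd (Or.inr ⟨_, hb'⟩) h1
      · exact absurd (Or.inl ⟨_, _, h2⟩) h1
      · rfl)
    (by
      rintro ⟨a, ha⟩ ⟨a', ha'⟩ ⟨b, hb⟩ h1 h2
      simp only [Subtype.mk.injEq] at h1 h2 ⊢
      rcases h1 with rfl | rfl | ⟨rfl, h1⟩ <;> rcases h2 with h2 | rfl | ⟨rfl, h2⟩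
      · simpa using h2
      · have := (chainRel_of_suffix hc ha').2 rfl
        simp at this
      · exact absurd (Or.inl ⟨_, _, rfl⟩) h2
      · subst h2
        have := (chainRel_of_suffix hc ha).2 rfl
        simp at this
      · rfl
      · exact absurd (Or.inr ⟨_, ha⟩) h2
      · exact absurd (Or.inl ⟨_, _, h2⟩) h1
      · exact absurd (Or.inr ⟨_, ha'⟩) h1
      · rfl)
  exact ⟨σ, fun s t h => hσ _ _ (Or.inl h), fun s t h => hσ _ _ (Or.inr (Or.inl h)),
    fun s h => hσ _ _ (Or.inr (Or.inr ⟨rfl, h⟩))⟩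

/-- The action of the right-angled Artin group on the vertices of a chain. -/
theorem exists_raag_action {c : List (V × Bool)} (hc : c.IsChain (ChainRel Γ)) :
    ∃ ρ : RAAG Γ →* Equiv.Perm {s // s <:+ c},
      (∀ x, ∀ s t : {s // s <:+ c}, t.1 = x :: s.1 → ρ (raagLetter Γ x) s = t) ∧
      ∀ x, ∀ s : {s // s <:+ c}, ¬ Touches c x.1 s.1 → ρ (raagLetter Γ x) s = s := by
  choose σ h1 h2 h3 using exists_gen_perm hc
  have hcomm : ∀ r ∈ raagRels Γ, FreeGroup.lift σ r = 1 := by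
    rintro r ⟨v, w, hvw, rfl⟩
    have hd : Equiv.Perm.Disjoint (σ v) (σ w) := by
      intro s
      by_cases hs : Touches c v s.1
      · exact Or.inr (h3 w s (not_touches_of_adj hc hvw s.2 hs))
      · exact Or.inl (h3 v s hs)
    have := hd.commute.eq
    simp only [map_mul, map_inv, FreeGroup.lift_apply_of]
    rw [this]
    group
  have hof : ∀ v, PresentedGroup.toGroup hcomm (PresentedGroup.of v) = σ v := fun v =>
    PresentedGroup.toGroup.of hcomm
  refine ⟨PresentedGroup.toGroup hcomm, ?_, ?_⟩
  · rintro ⟨v, b⟩ s t h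
    cases b
    · simp only [raagLetter, cond_false, map_inv, hof]
      rw [Equiv.Perm.inv_eq_iff_eq, h2 v t s h]
    · simp only [raagLetter, cond_true, hof]
      exact h1 v s t h
  · rintro ⟨v, b⟩ s h
    cases b
    · simp only [raagLetter, cond_false, map_inv, hof]
      rw [Equiv.Perm.inv_eq_iff_eq, h3 v s h]
    · simp only [raagLetter, cond_true, hof]
      exact h3 v s h

/-- A nontrivial element represented by a word of length `n` moves a point in some action on at
most `n + 1` points. -/
theorem raag_linear.{u} {V : Type u} (Γ : SimpleGraph V) (w : List (V × Bool))
    (hw : raagEval Γ w ≠ 1) :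
    ∃ (X : Type u) (_ : Finite X) (ρ : RAAG Γ →* Equiv.Perm X) (p : X),
      ρ (raagEval Γ w) p ≠ p ∧ Nat.card X ≤ w.length + 1 := by
  obtain ⟨u, hu, hmin⟩ : ∃ u, raagEval Γ u = raagEval Γ w ∧ RAAGShortest Γ u := by
    obtain ⟨u, hu, hm⟩ := exists_minimalFor_of_wellFoundedLT
      (fun u => raagEval Γ u = raagEval Γ w) List.length ⟨w, rfl⟩
    exact ⟨u, hu, fun l' hl' => (le_total _ _).elim id (hm (hl'.trans hu))⟩
  have hc := raagChain_isChain Γ u hmin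
  set c := raagChain Γ u with hcdef
  obtain ⟨ρ, h1, h2⟩ := exists_raag_action hc
  -- After reading the suffix `l` of `u`, the initial vertex has moved to the chain of `l`.
  have key : ∀ l, ∀ hs : raagChain Γ l <:+ c,
      ρ (raagEval Γ l) ⟨[], List.nil_suffix⟩ = ⟨raagChain Γ l, hs⟩ := by
    intro l
    induction l with
    | nil => intro hs; simp [raagChain]
    | cons x l ih =>
      intro hs
      have hs' := (raagChain_suffix Γ x l).trans hs
      rw [raagEval_cons, map_mul, Equiv.Perm.mul_apply, ih hs']
      obtain ⟨e, hd⟩ : ∃ e, raagChain Γ l = e := ⟨_, rfl⟩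
      simp only [hd]
      rcases e with _ | ⟨z, d⟩
      · apply h1
        simp [raagChain, hd]
      · by_cases hadj : Γ.Adj x.1 z.1
        · have he : raagChain Γ (x :: l) = z :: d := by simp [raagChain, hd, hadj]
          simp only [he]
          -- The letter is adjacent to the label of an edge at the current vertex, so it fixes it.
          apply h2
          exact not_touches_of_adj hc hadj.symm (s := z :: d) (he.subst (motive := (· <:+ c)) hs)
            (Or.inl ⟨z.2, d, rfl⟩)
        · apply h1
          simp [raagChain, hd, hadj]
  classical
  have hset : {s | s <:+ c} = (c.tails.toFinset : Set (List (V × Bool))) := by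
    ext s; simp
  refine ⟨{s // s <:+ c}, ?_, ρ, ⟨[], List.nil_suffix⟩, ?_, ?_⟩
  · have := List.finite_toSet c.tails
    simp only [List.mem_tails] at this
    exact this
  · rw [← hu, key u (List.suffix_refl _)]
    intro h
    have h' : raagChain Γ u = [] := congrArg Subtype.val h
    rcases u with _ | ⟨x, l⟩
    · exact hw (by rw [← hu, raagEval_nil])
    · exact raagChain_cons_ne_nil Γ x l h'
  · calc Nat.card {s // s <:+ c} = Set.ncard {s | s <:+ c} := rfl
      _ = c.tails.toFinset.card := by rw [hset, Set.ncard_coe_finset]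
      _ ≤ c.tails.length := List.toFinset_card_le _
      _ = c.length + 1 := List.length_tails _
      _ ≤ w.length + 1 := by
        have : c.length ≤ u.length := raagChain_length_le Γ u
        have := hmin w hu.symm
        omega

end RAAGWords

/-! ### Lengths in finite-index subgroups -/

theorem exists_list_of_wordLength_le {G : Type*} [Group G] (S : Set G)
    (hSgen : Subgroup.closure S = ⊤) (g : G) :
    ∃ l : List G, l.length = wordLength S g ∧ (∀ x ∈ l, x ∈ S ∪ S⁻¹) ∧ l.prod = g := by
  have hne : {n | ∃ l : List G, l.length = n ∧ (∀ x ∈ l, x ∈ S ∪ S⁻¹) ∧ l.prod = g}.Nonempty := by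
    obtain ⟨l, hl, hp⟩ := Submonoid.exists_list_of_mem_closure
      (show g ∈ Submonoid.closure (S ∪ S⁻¹) by
        rw [← Subgroup.closure_toSubmonoid, hSgen]; trivial)
    exact ⟨_, l, rfl, hl, hp⟩
  exact Nat.sInf_mem hne

/-- Reidemeister–Schreier rewriting, with lengths: the length of `φ h` is at most linear in the
length of `h` as an element of `G`. -/
theorem exists_length_bound {G : Type*} [Group G] (S : Set G) (hSfin : S.Finite)
    (H : Subgroup G) (hH : H.FiniteIndex) {V : Type*} (Γ : SimpleGraph V) (φ : H →* RAAG Γ) :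
    ∃ M : ℕ, ∀ l : List G, (∀ x ∈ l, x ∈ S ∪ S⁻¹) → ∀ h : H, l.prod = h →
      ∃ w, raagEval Γ w = φ h ∧ w.length ≤ M * (l.length + 1) := by
  -- The chosen representative of the left coset `gH`.
  let r : G → G := fun g => (QuotientGroup.mk (s := H) g).out
  have hr : ∀ g, (r g)⁻¹ * g ∈ H := fun g => by
    rw [← QuotientGroup.eq]; exact Quotient.out_eq' _
  have hr2 : ∀ s g, r (s * r g) = r (s * g) := fun s g => by
    have : (QuotientGroup.mk (s := H) (s * r g)) = QuotientGroup.mk (s * g) := by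
      rw [QuotientGroup.eq]
      have := hr g
      simpa [mul_assoc] using this
    simp only [r] at this ⊢
    rw [this]
  let ψ : G → H := fun g => ⟨(r g)⁻¹ * g, hr g⟩
  choose len hlen using raagEval_surjective Γ
  -- The Schreier generator for `s` and `g` depends only on `s` and the coset of `g`.
  let κ : G × (G ⧸ H) → H := fun p => ψ (p.1 * p.2.out)
  have hfin : ((S ∪ S⁻¹) ×ˢ (Set.univ : Set (G ⧸ H))).Finite :=
    (hSfin.union hSfin.inv).prod Set.finite_univ
  obtain ⟨L, hL⟩ := (hfin.image fun p => (len (φ (κ p))).length).bddAbove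
  let r1 : H := ⟨r 1, by simpa using H.inv_mem (hr 1)⟩
  have key : ∀ l : List G, (∀ x ∈ l, x ∈ S ∪ S⁻¹) →
      ∃ w, raagEval Γ w = φ (ψ l.prod) ∧
        w.length ≤ L * l.length + (len (φ (ψ 1))).length := by
    intro l hl
    induction l with
    | nil => exact ⟨_, hlen _, by simp⟩
    | cons s l ih =>
      obtain ⟨w, hw, hwl⟩ := ih fun x hx => hl x (List.mem_cons_of_mem _ hx)
      have hs : (len (φ (κ (s, QuotientGroup.mk l.prod)))).length ≤ L :=
        hL ⟨(s, QuotientGroup.mk l.prod), ⟨hl s List.mem_cons_self, trivial⟩, rfl⟩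
      refine ⟨len (φ (κ (s, QuotientGroup.mk l.prod))) ++ w, ?_, ?_⟩
      · rw [raagEval_append, hlen, hw, ← map_mul]
        congr 1
        apply Subtype.ext
        change (r (s * r l.prod))⁻¹ * (s * r l.prod) * ((r l.prod)⁻¹ * l.prod) = _
        rw [hr2, List.prod_cons]
        simp [ψ, mul_assoc]
      · rw [List.length_append, List.length_cons, mul_add]
        omega
  refine ⟨L + (len (φ (ψ 1))).length + (len (φ r1)).length, fun l hl h hlh => ?_⟩
  obtain ⟨w, hw, hwl⟩ := key l hl
  refine ⟨len (φ r1) ++ w, ?_, ?_⟩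
  · rw [raagEval_append, hlen, hw, ← map_mul]
    congr 1
    apply Subtype.ext
    have h1 : r l.prod = r 1 := by
      have : (QuotientGroup.mk (s := H) l.prod) = QuotientGroup.mk 1 := by
        rw [QuotientGroup.eq, hlh]
        simp
      simp only [r, this]
    change r 1 * ((r l.prod)⁻¹ * l.prod) = h
    rw [h1, hlh]
    simp
  · rw [List.length_append]
    nlinarith [Nat.zero_le ((len (φ (ψ 1))).length * l.length),
      Nat.zero_le ((len (φ r1)).length * l.length)]

/-- **Virtually special groups have at most linear residual finiteness growth**:
if `G` is finitely generated with finite generating set `S`, `H ≤ G` has finite index, and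
`H` embeds into a right-angled Artin group on a finite simplicial graph `Γ`, then there is
`C > 0` such that every nontrivial `g ∈ G` of word length at most `n` (for every `n ≥ 1`)
lies outside a subgroup of `G` of index at most `C·n`. -/
theorem virtually_special_residual_finiteness_growth_le_linear
    {G : Type*} [Group G] (S : Set G) (hSfin : S.Finite) (hSgen : Subgroup.closure S = ⊤)
    (H : Subgroup G) (hH : H.FiniteIndex)
    {V : Type*} [Fintype V] (Γ : SimpleGraph V)
    (φ : H →* RAAG Γ) (hφ : Function.Injective φ) :
    ∃ C : ℕ, 0 < C ∧ ∀ n : ℕ, 1 ≤ n → ∀ g : G, g ≠ 1 → wordLength S g ≤ n →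
      ∃ B : Subgroup G, g ∉ B ∧ B.index ≠ 0 ∧ B.index ≤ C * n := by
  obtain ⟨M, hM⟩ := exists_length_bound S hSfin H hH Γ φ
  have hH0 : H.index ≠ 0 := hH.index_ne_zero
  have hH1 : 1 ≤ H.index := Nat.one_le_iff_ne_zero.2 hH0
  refine ⟨(2 * M + 1) * H.index, by positivity, fun n hn g hg hgn => ?_⟩
  by_cases hgH : g ∈ H
  · obtain ⟨l, hl, hlS, hlg⟩ := exists_list_of_wordLength_le S hSgen g
    obtain ⟨w, hw, hwl⟩ := hM l hlS ⟨g, hgH⟩ hlg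
    have hne : raagEval Γ w ≠ 1 := by
      rw [hw]
      intro h
      have := hφ (h.trans (map_one φ).symm)
      exact hg (congrArg Subtype.val this)
    obtain ⟨X, hX, ρ, p, hp, hcard⟩ := raag_linear Γ w hne
    let act : MulAction H X := MulAction.compHom X (ρ.comp φ)
    let K : Subgroup H := MulAction.stabilizer H p
    have hK : K.index = (MulAction.orbit H p).ncard := MulAction.index_stabilizer H p
    have hK0 : K.index ≠ 0 := by
      rw [hK, ← Nat.pos_iff_ne_zero, Set.ncard_pos]
      exact MulAction.nonempty_orbit p
    have hKle : K.index ≤ M * (n + 1) + 1 := by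
      have h1 : K.index ≤ Nat.card X := hK ▸ Set.ncard_le_card _
      have h2 : M * (l.length + 1) ≤ M * (n + 1) := Nat.mul_le_mul_left _ (by omega)
      omega
    refine ⟨K.map H.subtype, ?_, ?_, ?_⟩
    · rintro ⟨k, hk, hkg⟩
      obtain rfl : k = ⟨g, hgH⟩ := Subtype.ext hkg
      rw [hw] at hp
      exact hp hk
    · rw [Subgroup.index_map_subtype]
      exact mul_ne_zero hK0 hH0
    · rw [Subgroup.index_map_subtype]
      calc K.index * H.index ≤ ((2 * M + 1) * n) * H.index :=
            Nat.mul_le_mul_right _ (by nlinarith)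
        _ = _ := by ring
  · exact ⟨H, hgH, hH0, by nlinarith [Nat.zero_le (M * H.index * n)]⟩
end

section
/- Let G be a group generated by a finite set S, let H ≤ G be a subgroup generated by a finite set L ⊆ G, and let Ω be a class of subgroups of G. Then there exists C > 0 such that for all n ≥ 1, F_{H,L}^{Ω∩H}(n) ≤ F_{G,S}^{Ω}(C·n), where Ω∩H = {Δ ∩ H : Δ ∈ Ω} is regarded as a class of subgroups of H. -/
/-- The index of a subgroup, valued in `ℕ∞`, with `⊤` for infinite index. -/
noncomputable def eIndex {G : Type*} [Group G] (B : Subgroup G) : ℕ∞ :=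
  if B.index = 0 then ⊤ else (B.index : ℕ∞)

/-- The divisibility function relative to a class `Ω` of subgroups:
the minimal index of a subgroup in `Ω` not containing `g`. -/
noncomputable def resD {G : Type*} [Group G] (Ω : Set (Subgroup G)) (g : G) : ℕ∞ :=
  ⨅ B ∈ {B | B ∈ Ω ∧ g ∉ B}, eIndex B

/-- The residual `Ω` growth function with respect to a generating set `S`:
the maximum of the divisibility function over elements of word length at most `n`
lying outside `Λ_Ω = ⋂_{Δ ∈ Ω} Δ`. -/
noncomputable def resF {G : Type*} [Group G] (S : Set G) (Ω : Set (Subgroup G)) (n : ℕ) : ℕ∞ :=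
  ⨆ g ∈ {g : G | (∃ B ∈ Ω, g ∉ B) ∧ wordLength S g ≤ n}, resD Ω g

/-- The class `Ω ∩ H = {Δ ∩ H : Δ ∈ Ω}` of subgroups of `H` obtained by intersecting the
members of a class `Ω` of subgroups of `G` with a subgroup `H ≤ G`. -/
def interH {G : Type*} [Group G] (Ω : Set (Subgroup G)) (H : Subgroup G) :
    Set (Subgroup ↥H) :=
  {Δ | ∃ B ∈ Ω, Δ = B.subgroupOf H}

/-- For a generating set, the set of lengths whose infimum is the word length is nonempty, so the
infimum is attained. -/
lemma exists_word_of_closure_eq_top {G : Type*} [Group G] {S : Set G}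
    (hS : Subgroup.closure S = ⊤) (g : G) :
    ∃ l : List G, l.length = wordLength S g ∧ (∀ x ∈ l, x ∈ S ∪ S⁻¹) ∧ l.prod = g := by
  have hne : {n | ∃ l : List G, l.length = n ∧ (∀ x ∈ l, x ∈ S ∪ S⁻¹) ∧ l.prod = g}.Nonempty := by
    have hg : g ∈ Submonoid.closure (S ∪ S⁻¹) := by
      rw [← Subgroup.closure_toSubmonoid, hS]
      exact Subgroup.mem_top g
    obtain ⟨l, hl, hp⟩ := Submonoid.exists_list_of_mem_closure hg
    exact ⟨l.length, l, rfl, hl, hp⟩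
  exact Nat.sInf_mem hne

lemma wordLength_mul_le {G : Type*} [Group G] {S : Set G}
    (hS : Subgroup.closure S = ⊤) (a b : G) :
    wordLength S (a * b) ≤ wordLength S a + wordLength S b := by
  obtain ⟨l, hl, hlS, hlp⟩ := exists_word_of_closure_eq_top hS a
  obtain ⟨m, hm, hmS, hmp⟩ := exists_word_of_closure_eq_top hS b
  refine Nat.sInf_le ⟨l ++ m, by simp [hl, hm], fun x hx => ?_, by simp [hlp, hmp]⟩
  rcases List.mem_append.1 hx with h | h
  exacts [hlS x h, hmS x h]

lemma wordLength_list_prod_le {G : Type*} [Group G] {S : Set G}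
    (hS : Subgroup.closure S = ⊤) {C : ℕ} (l : List G) (hl : ∀ x ∈ l, wordLength S x ≤ C) :
    wordLength S l.prod ≤ C * l.length := by
  induction l with
  | nil => exact Nat.sInf_le ⟨[], by simp⟩
  | cons a l ih =>
    have h1 := wordLength_mul_le hS a l.prod
    have h2 := hl a (by simp)
    have h3 := ih fun x hx => hl x (by simp [hx])
    rw [List.prod_cons, List.length_cons, Nat.mul_succ]
    omega

lemma eIndex_subgroupOf_le {G : Type*} [Group G] (B H : Subgroup G) :
    eIndex (B.subgroupOf H) ≤ eIndex B := by
  by_cases hB : B.index = 0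
  · simp [eIndex, hB]
  · have hle : B.relIndex H ≤ B.relIndex ⊤ :=
      Subgroup.relIndex_le_of_le_right le_top (by rwa [Subgroup.relIndex_top_right])
    have hne : B.relIndex H ≠ 0 := fun h =>
      hB (by rw [← Subgroup.relIndex_top_right]; exact Subgroup.relIndex_eq_zero_of_le_right le_top h)
    rw [Subgroup.relIndex_top_right] at hle
    change (if B.relIndex H = 0 then ⊤ else (B.relIndex H : ℕ∞)) ≤ _
    rw [if_neg hne, eIndex, if_neg hB]
    exact_mod_cast hle

lemma resD_interH_le {G : Type*} [Group G] (Ω : Set (Subgroup G)) (H : Subgroup G) (h : H) :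
    resD (interH Ω H) h ≤ resD Ω (h : G) :=
  le_iInf₂ fun B hB =>
    (iInf₂_le (B.subgroupOf H)
      ⟨⟨B, hB.1, rfl⟩, fun hh => hB.2 (Subgroup.mem_subgroupOf.1 hh)⟩).trans
      (eIndex_subgroupOf_le B H)

/-- **Lemma 2.1**: if `G` is generated by `S` and `H ≤ G` is generated by a finite set
`L ⊆ G`, and `Ω` is a class of subgroups of `G`, then there is `C > 0` with
`F_{H,L}^{Ω∩H}(n) ≤ F_{G,S}^{Ω}(C·n)` for all `n ≥ 1`. -/
theorem resF_le_of_subgroup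
    {G : Type*} [Group G] (S : Set G) (hSfin : S.Finite) (hSgen : Subgroup.closure S = ⊤)
    (H : Subgroup G) (L : Set G) (hLfin : L.Finite) (hLgen : Subgroup.closure L = H)
    (Ω : Set (Subgroup G)) :
    ∃ C : ℕ, 0 < C ∧ ∀ n : ℕ, 1 ≤ n →
      resF ((Subtype.val : ↥H → G) ⁻¹' L) (interH Ω H) n ≤ resF S Ω (C * n) := by
  obtain ⟨C, hC⟩ := ((hLfin.union hLfin.inv).image (wordLength S)).bddAbove
  have hgen : Subgroup.closure ((Subtype.val : ↥H → G) ⁻¹' L) = ⊤ := by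
    subst hLgen
    exact Subgroup.closure_closure_coe_preimage
  -- `C` itself may be `0`, for instance when `L` is empty.
  refine ⟨C + 1, C.succ_pos, fun n _ => iSup₂_le fun h hh => ?_⟩
  obtain ⟨⟨_, ⟨B, hB, rfl⟩, hhB⟩, hlen⟩ := hh
  refine (resD_interH_le Ω H h).trans ?_
  refine le_iSup₂ (f := fun g (_ : g ∈ {g : G | (∃ B ∈ Ω, g ∉ B) ∧
    wordLength S g ≤ (C + 1) * n}) => resD Ω g) (h : G) ⟨⟨B, hB, fun hm =>
      hhB (Subgroup.mem_subgroupOf.2 hm)⟩, ?_⟩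
  obtain ⟨l, hl, hlL, hlp⟩ := exists_word_of_closure_eq_top hgen h
  have key := wordLength_list_prod_le hSgen (C := C + 1) (l.map Subtype.val) (by
    intro x hx
    obtain ⟨y, hy, rfl⟩ := List.mem_map.1 hx
    have hyL : (y : G) ∈ L ∪ L⁻¹ := by simpa using hlL y hy
    exact (hC ⟨_, hyL, rfl⟩).trans C.le_succ)
  have hprod : (l.map Subtype.val).prod = (h : G) := by
    rw [← hlp]
    exact (map_list_prod H.subtype l).symm
  rw [hprod, List.length_map, hl] at key
  exact key.trans (Nat.mul_le_mul_left _ hlen)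
end

section
/- Fix k ≥ 3 and let H ≤ SL_k(ℤ) be the generalized Heisenberg subgroup, consisting of all upper unitriangular integer matrices whose off-diagonal entries vanish except possibly those in the first row (positions (1,j) for 2 ≤ j ≤ k) and in the last column (positions (i,k) for 2 ≤ i ≤ k−1). For n ≥ 1 let g_n = E_{1,k}(lcm(1,2,…,n)) be the elementary matrix equal to the identity except with entry lcm(1,…,n) in position (1,k). Then every finite-index subgroup Δ ≤ H with g_n ∉ Δ satisfies [H : Δ] ≥ n^{k-1}; that is, D_H(g_n) ≥ n^{k-1}. -/
/-!
Write `k = m + 2` and `c = E_{1,k}(1)`. Sending a Heisenberg matrix to the middle parts of its first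
row and last column is a surjection `H → ℤᵐ × ℤᵐ`, and `g h = c ^ ω(g, h) · h g`, where `ω` is the
standard symplectic form evaluated on the images (`heis_comm`).

Let `d = [⟨c⟩ : ⟨c⟩ ∩ Δ]`, so that `c ^ t ∈ Δ` iff `d ∣ t` (`zpow_mem_iff_relIndex_dvd`). The
commutators of elements of `Δ` lie in `Δ ∩ ⟨c⟩`, so the image `A` of `Δ` in `W = (ℤ/d)ᵐ × (ℤ/d)ᵐ`
is isotropic. The form then embeds `A` in the dual of `W ⧸ A`, whence `|A| ≤ [W : A]`
and `[W : A] ≥ dᵐ` (`pow_le_index_of_isotropic`). Passing through the subgroup generated by `Δ` and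
the kernel of `H → W`, which contains `c`, gives `[H : Δ] ≥ d · [W : A] ≥ d ^ (m + 1)`
(`relIndex_pow_le_index`). If `c ^ lcm(1, …, n) ∉ Δ`, then `d ∤ lcm(1, …, n)`, so `d > n`.
-/

/-! ### Isotropic subgroups of a finite symplectic module -/

open scoped Matrix in
/-- The standard symplectic form on `Rᵐ × Rᵐ`. -/
def symp {R : Type*} [CommRing R] {m : ℕ} (v w : (Fin m → R) × (Fin m → R)) : R :=
  v.1 ⬝ᵥ w.2 - w.1 ⬝ᵥ v.2

lemma symp_add_right {R : Type*} [CommRing R] {m : ℕ} (v w w' : (Fin m → R) × (Fin m → R)) :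
    symp v (w + w') = symp v w + symp v w' := by
  simp only [symp, Prod.fst_add, Prod.snd_add, dotProduct_add, add_dotProduct]
  ring

lemma symp_sub_left {R : Type*} [CommRing R] {m : ℕ} (v v' w : (Fin m → R) × (Fin m → R)) :
    symp (v - v') w = symp v w - symp v' w := by
  simp only [symp, Prod.fst_sub, Prod.snd_sub, dotProduct_sub, sub_dotProduct]
  ring

lemma symp_nondeg {R : Type*} [CommRing R] {m : ℕ} (v : (Fin m → R) × (Fin m → R))
    (h : ∀ w, symp v w = 0) : v = 0 := by
  ext i
  · simpa [symp] using h (0, Pi.single i 1)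
  · simpa [symp] using h (Pi.single i 1, 0)

/-- An isotropic subgroup `A` of `W = (ℤ/d)ᵐ × (ℤ/d)ᵐ` has index at least `dᵐ`: the symplectic
form embeds `A` in the dual of `W ⧸ A`, so `|A| ≤ [W : A]`, whereas `|A| [W : A] = d²ᵐ`. -/
lemma pow_le_index_of_isotropic {d m : ℕ} [NeZero d]
    (A : AddSubgroup ((Fin m → ZMod d) × (Fin m → ZMod d)))
    (hA : ∀ v ∈ A, ∀ w ∈ A, symp v w = 0) : d ^ m ≤ A.index := by
  classical
  let W := (Fin m → ZMod d) × (Fin m → ZMod d)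
  let F (v : W) : W →+ ZMod d :=
    AddMonoidHom.mk' (symp v) (symp_add_right v)
  let Φ (v : A) : AddChar (W ⧸ A) ℂ :=
    ZMod.stdAddChar.compAddMonoidHom (QuotientAddGroup.lift A (F v) fun w hw => hA v v.2 w hw)
  have hΦ : Function.Injective Φ := by
    intro v v' h
    have key : ∀ w : W, symp (v : W) w = symp (v' : W) w := fun w =>
      ZMod.injective_stdAddChar (DFunLike.congr_fun h (QuotientAddGroup.mk w))
    exact Subtype.ext (sub_eq_zero.mp (symp_nondeg _ fun w => by
      rw [symp_sub_left, key, sub_self]))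
  have h1 : Nat.card A ≤ A.index := by
    have hcard := Nat.card_le_card_of_injective Φ hΦ
    let _ : Fintype (W ⧸ A) := Fintype.ofFinite _
    rwa [Nat.card_eq_fintype_card (α := AddChar _ _), AddChar.card_eq,
      ← Nat.card_eq_fintype_card] at hcard
  have h2 : Nat.card A * A.index = d ^ m * d ^ m := by
    rw [A.card_mul_index]
    simp
  by_contra! hlt
  have h3 : Nat.card A * A.index < d ^ m * d ^ m :=
    Nat.mul_lt_mul_of_le_of_lt' (h1.trans hlt.le) hlt Nat.card_pos
  omega

/-! ### The index bound in an abstract Heisenberg group -/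

/-- For a finite-index subgroup `Δ` and an element `c`, the exponents `t` with `c ^ t ∈ Δ` form
`dℤ` with `d = [⟨c⟩ : ⟨c⟩ ∩ Δ]`. -/
lemma zpow_mem_iff_relIndex_dvd {G : Type*} [Group G] (Δ : Subgroup G) (c : G) (t : ℤ) :
    c ^ t ∈ Δ ↔ ((Δ.relIndex (Subgroup.zpowers c) : ℕ) : ℤ) ∣ t := by
  let B : AddSubgroup ℤ := Subgroup.toAddSubgroup' (Δ.comap (zpowersHom G c))
  have hB : ∀ s : ℤ, s ∈ B ↔ c ^ s ∈ Δ := fun s => Iff.rfl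
  have hidx : B.index = Δ.relIndex (Subgroup.zpowers c) := Subgroup.index_comap Δ (zpowersHom G c)
  obtain ⟨a, ha⟩ := Int.subgroup_cyclic B
  rw [← AddSubgroup.zmultiples_eq_closure] at ha
  rw [← hB, ← hidx, ha, Int.index_zmultiples, Int.mem_zmultiples_iff, Int.natAbs_dvd]

/-- The index bound for an abstract Heisenberg-type group: a group `G` with a surjection
onto `ℤᵐ × ℤᵐ` whose commutators are the powers of `c` prescribed by the symplectic form. -/
lemma relIndex_pow_le_index {G : Type*} [Group G] {m : ℕ} (c : G)
    (φ : G →* Multiplicative ((Fin m → ℤ) × (Fin m → ℤ))) (hφ : Function.Surjective φ)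
    (hc : φ c = 1)
    (hcomm : ∀ g h : G, g * h = c ^ symp (φ g).toAdd (φ h).toAdd * (h * g))
    (Δ : Subgroup G) [Δ.FiniteIndex] :
    Δ.relIndex (Subgroup.zpowers c) ^ (m + 1) ≤ Δ.index := by
  set d := Δ.relIndex (Subgroup.zpowers c) with hd
  have hrel (K : Subgroup G) : Δ.relIndex K ≠ 0 :=
    Subgroup.isFiniteRelIndex_of_finiteIndex.relIndex_ne_zero
  have hd0 : d ≠ 0 := hrel _
  have : NeZero d := ⟨hd0⟩
  let r : (Fin m → ℤ) →+ (Fin m → ZMod d) := (Int.castAddHom (ZMod d)).compLeft (Fin m)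
  have hr : Function.Surjective r := fun v =>
    ⟨fun i => (ZMod.intCast_surjective (v i)).choose,
      funext fun i => (ZMod.intCast_surjective (v i)).choose_spec⟩
  let ρ := AddMonoidHom.toMultiplicative (r.prodMap r)
  have hρ : Function.Surjective ρ := hr.prodMap hr
  have hsymp : ∀ v w, symp (ρ v).toAdd (ρ w).toAdd = ((symp v.toAdd w.toAdd : ℤ) : ZMod d) := by
    intro v w
    simp [symp, dotProduct, ρ, r]
  let ψ := ρ.comp φ
  have hψ : Function.Surjective ψ := hρ.comp hφ
  let A := Subgroup.toAddSubgroup' (Δ.map ψ)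
  have hA : d ^ m ≤ A.index := by
    apply pow_le_index_of_isotropic
    rintro _ ⟨g, hg, rfl⟩ _ ⟨h, hh, rfl⟩
    refine (hsymp (φ g) (φ h)).trans ?_
    rw [ZMod.intCast_zmod_eq_zero_iff_dvd, hd, ← zpow_mem_iff_relIndex_dvd,
      ← mul_inv_eq_iff_eq_mul.mpr (hcomm g h)]
    exact Δ.mul_mem (Δ.mul_mem hg hh) (Δ.inv_mem (Δ.mul_mem hh hg))
  have hA' : A.index = (Δ ⊔ ψ.ker).index := by
    have := Subgroup.index_map Δ ψ
    rw [MonoidHom.range_eq_top.mpr hψ, Subgroup.index_top, mul_one] at this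
    exact this
  have hcK : Subgroup.zpowers c ≤ Δ ⊔ ψ.ker := by
    refine le_sup_of_le_right (Subgroup.zpowers_le.mpr ?_)
    simp [ψ, MonoidHom.mem_ker, hc]
  have hle : d ≤ Δ.relIndex (Δ ⊔ ψ.ker) :=
    Subgroup.relIndex_le_of_le_right hcK (hrel _)
  rw [← Subgroup.relIndex_mul_index (le_sup_left : Δ ≤ Δ ⊔ ψ.ker), ← hA', pow_succ']
  exact Nat.mul_le_mul hle hA

/-! ### Heisenberg matrices -/

/-- The shape of the elements of the generalized Heisenberg group of size `m + 2`: ones on the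
diagonal, and off the diagonal only the first row and the last column may be nonzero. -/
def IsHeis {m : ℕ} (M : Matrix (Fin (m + 2)) (Fin (m + 2)) ℤ) : Prop :=
  (∀ i, M i i = 1) ∧ ∀ i j, i ≠ j → i ≠ 0 → j ≠ Fin.last (m + 1) → M i j = 0

/-- The `m` indices strictly between the first and the last one. -/
def mid {m : ℕ} (i : Fin m) : Fin (m + 2) := i.succ.castSucc

lemma mid_ne_zero {m : ℕ} (i : Fin m) : mid i ≠ 0 := by simp [mid, Fin.ext_iff]

lemma mid_ne_last {m : ℕ} (i : Fin m) : mid i ≠ Fin.last (m + 1) := by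
  simp [mid, Fin.ext_iff]; omega

lemma mid_inj {m : ℕ} {i j : Fin m} : mid i = mid j ↔ i = j := by simp [mid]

lemma last_ne_zero' {m : ℕ} : Fin.last (m + 1) ≠ 0 := by simp [Fin.ext_iff]

lemma eq_zero_or_mid_or_last {m : ℕ} (i : Fin (m + 2)) :
    i = 0 ∨ (∃ j, i = mid j) ∨ i = Fin.last (m + 1) := by
  refine Fin.lastCases (by simp) (fun i => ?_) i
  refine Fin.cases (by simp) (fun i => ?_) i
  exact .inr (.inl ⟨i, rfl⟩)

lemma sum_mid {m : ℕ} (f : Fin (m + 2) → ℤ) :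
    ∑ i, f i = f 0 + ∑ i : Fin m, f (mid i) + f (Fin.last (m + 1)) := by
  rw [Fin.sum_univ_castSucc, Fin.sum_univ_succ]
  rfl

namespace IsHeis

variable {m : ℕ} {M N : Matrix (Fin (m + 2)) (Fin (m + 2)) ℤ}

lemma apply_mid_mid (hM : IsHeis M) (i j : Fin m) : M (mid i) (mid j) = if i = j then 1 else 0 := by
  split_ifs with h
  · rw [h, hM.1]
  · exact hM.2 _ _ (by rwa [Ne, mid_inj]) (mid_ne_zero i) (mid_ne_last j)

lemma apply_last_zero (hM : IsHeis M) : M (Fin.last (m + 1)) 0 = 0 :=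
  hM.2 _ _ last_ne_zero' last_ne_zero' last_ne_zero'.symm

lemma apply_mid_zero (hM : IsHeis M) (i : Fin m) : M (mid i) 0 = 0 :=
  hM.2 _ _ (mid_ne_zero i) (mid_ne_zero i) last_ne_zero'.symm

lemma apply_last_mid (hM : IsHeis M) (i : Fin m) : M (Fin.last (m + 1)) (mid i) = 0 :=
  hM.2 _ _ (mid_ne_last i).symm last_ne_zero' (mid_ne_last i)

lemma ext (hM : IsHeis M) (hN : IsHeis N) (h1 : ∀ i, M 0 (mid i) = N 0 (mid i))
    (h2 : ∀ i, M (mid i) (Fin.last (m + 1)) = N (mid i) (Fin.last (m + 1)))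
    (h3 : M 0 (Fin.last (m + 1)) = N 0 (Fin.last (m + 1))) : M = N := by
  ext i j
  rcases eq_zero_or_mid_or_last i with rfl | ⟨i, rfl⟩ | rfl <;>
  rcases eq_zero_or_mid_or_last j with rfl | ⟨j, rfl⟩ | rfl <;>
  simp [*, hM.1, hN.1, apply_mid_mid, apply_last_zero, apply_mid_zero, apply_last_mid]

lemma mul_zero_mid (hM : IsHeis M) (hN : IsHeis N) (i : Fin m) :
    (M * N) 0 (mid i) = M 0 (mid i) + N 0 (mid i) := by
  simp [Matrix.mul_apply, sum_mid, hM.1, hN.apply_mid_mid, hN.apply_last_mid, add_comm]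

lemma mul_mid_last (hM : IsHeis M) (hN : IsHeis N) (i : Fin m) :
    (M * N) (mid i) (Fin.last (m + 1)) =
      M (mid i) (Fin.last (m + 1)) + N (mid i) (Fin.last (m + 1)) := by
  simp [Matrix.mul_apply, sum_mid, hN.1, hM.apply_mid_mid, hM.apply_mid_zero, add_comm]

lemma mul_zero_last (hM : IsHeis M) (hN : IsHeis N) :
    (M * N) 0 (Fin.last (m + 1)) = N 0 (Fin.last (m + 1)) +
      ∑ i, M 0 (mid i) * N (mid i) (Fin.last (m + 1)) + M 0 (Fin.last (m + 1)) := by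
  simp [Matrix.mul_apply, sum_mid, hM.1, hN.1]

lemma det_eq_one (hM : IsHeis M) : M.det = 1 := by
  have : M.IsUpperTriangular := fun i j (hij : j < i) =>
    hM.2 i j hij.ne' (Fin.ne_zero_of_lt hij) (Fin.ne_last_of_lt hij)
  rw [Matrix.det_of_isUpperTriangular this]
  simp [hM.1]

end IsHeis

/-- The Heisenberg matrix with first row `(1, a, z)` and last column `(z, b, 1)`. -/
def heisMatrix {m : ℕ} (a b : Fin m → ℤ) (z : ℤ) : Matrix (Fin (m + 2)) (Fin (m + 2)) ℤ :=
  fun i j =>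
    if i = j then 1
    else if i = 0 then (Fin.cons 0 (Fin.snoc a z : Fin (m + 1) → ℤ) : Fin (m + 2) → ℤ) j
    else if j = Fin.last (m + 1) then
      (Fin.cons 0 (Fin.snoc b 0 : Fin (m + 1) → ℤ) : Fin (m + 2) → ℤ) i
    else 0

section heisMatrix

variable {m : ℕ} (a b : Fin m → ℤ) (z : ℤ)

lemma isHeis_heisMatrix : IsHeis (heisMatrix a b z) :=
  ⟨fun i => by simp [heisMatrix], fun i j h1 h2 h3 => by simp [heisMatrix, h1, h2, h3]⟩

lemma heisMatrix_zero_mid (i : Fin m) : heisMatrix a b z 0 (mid i) = a i := by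
  rw [heisMatrix, if_neg (mid_ne_zero i).symm, if_pos rfl, mid, ← Fin.succ_castSucc,
    Fin.cons_succ, Fin.snoc_castSucc]

lemma heisMatrix_mid_last (i : Fin m) : heisMatrix a b z (mid i) (Fin.last (m + 1)) = b i := by
  rw [heisMatrix, if_neg (mid_ne_last i), if_neg (mid_ne_zero i), if_pos rfl, mid,
    ← Fin.succ_castSucc, Fin.cons_succ, Fin.snoc_castSucc]

lemma heisMatrix_zero_last : heisMatrix a b z 0 (Fin.last (m + 1)) = z := by
  rw [heisMatrix, if_neg last_ne_zero'.symm, if_pos rfl, ← Fin.succ_last, Fin.cons_succ,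
    Fin.snoc_last]

end heisMatrix

lemma transvection_eq_heisMatrix {m : ℕ} (z : ℤ) :
    Matrix.transvection 0 (Fin.last (m + 1)) z = heisMatrix (0 : Fin m → ℤ) 0 z := by
  refine IsHeis.ext ⟨fun i => ?_, fun i j h1 h2 h3 => ?_⟩ (isHeis_heisMatrix _ _ _)
    (fun i => ?_) (fun i => ?_) ?_
  · rcases eq_or_ne i 0 with rfl | h
    · simp [Matrix.transvection]
    · simp [Matrix.transvection, h.symm]
  · simp [Matrix.transvection, h1, h2.symm]
  · simp [heisMatrix_zero_mid, Matrix.transvection,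
      (mid_ne_zero i).symm, (mid_ne_last i).symm]
  · simp [heisMatrix_mid_last, Matrix.transvection,
      (mid_ne_zero i).symm, mid_ne_last i]
  · simp [heisMatrix_zero_last, Matrix.transvection, last_ne_zero'.symm]

/-! ### The generalized Heisenberg group -/

section HeisGroup

variable {m : ℕ} (H : Subgroup (Matrix.SpecialLinearGroup (Fin (m + 2)) ℤ))

/-- The element of the Heisenberg group with the given entries. -/
def heisElem (hH : ∀ g, g ∈ H ↔ IsHeis g.1) (a b : Fin m → ℤ) (z : ℤ) : H :=
  ⟨⟨heisMatrix a b z, (isHeis_heisMatrix a b z).det_eq_one⟩, (hH _).2 (isHeis_heisMatrix a b z)⟩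

/-- The homomorphism sending a Heisenberg matrix to the middle parts of its first row
and of its last column. -/
def heisProj (hH : ∀ g, g ∈ H ↔ IsHeis g.1) :
    H →* Multiplicative ((Fin m → ℤ) × (Fin m → ℤ)) :=
  MonoidHom.mk'
    (fun g => Multiplicative.ofAdd
      (fun i => g.1.1 0 (mid i), fun i => g.1.1 (mid i) (Fin.last (m + 1))))
    (fun g h => congrArg Multiplicative.ofAdd (Prod.ext
      (funext fun i => ((hH g.1).1 g.2).mul_zero_mid ((hH h.1).1 h.2) i)
      (funext fun i => ((hH g.1).1 g.2).mul_mid_last ((hH h.1).1 h.2) i)))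

lemma heisElem_ext (hH : ∀ g, g ∈ H ↔ IsHeis g.1) {g h : H}
    (h1 : ∀ i, g.1.1 0 (mid i) = h.1.1 0 (mid i))
    (h2 : ∀ i, g.1.1 (mid i) (Fin.last (m + 1)) = h.1.1 (mid i) (Fin.last (m + 1)))
    (h3 : g.1.1 0 (Fin.last (m + 1)) = h.1.1 0 (Fin.last (m + 1))) :
    g = h :=
  Subtype.ext (Subtype.ext (((hH g.1).1 g.2).ext ((hH h.1).1 h.2) h1 h2 h3))

variable (hH : ∀ g, g ∈ H ↔ IsHeis g.1)

lemma heisProj_heisElem (a b : Fin m → ℤ) (z : ℤ) :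
    heisProj H hH (heisElem H hH a b z) = Multiplicative.ofAdd (a, b) :=
  congrArg Multiplicative.ofAdd (Prod.ext
    (funext (heisMatrix_zero_mid a b z)) (funext (heisMatrix_mid_last a b z)))

lemma heisProj_surjective : Function.Surjective (heisProj H hH) := fun v =>
  ⟨heisElem H hH v.toAdd.1 v.toAdd.2 0, heisProj_heisElem H hH _ _ _⟩

/-- The central one-parameter subgroup `z ↦ E_{1,k}(z)`. -/
def heisCenter : Multiplicative ℤ →* H :=
  MonoidHom.mk' (fun z => heisElem H hH 0 0 z.toAdd) fun z w => by
    have h := isHeis_heisMatrix (0 : Fin m → ℤ) 0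
    refine heisElem_ext H hH (fun i => ?_) (fun i => ?_) ?_
    · refine Eq.trans ?_ ((h z.toAdd).mul_zero_mid (h w.toAdd) i).symm
      simp [heisElem, heisMatrix_zero_mid]
    · refine Eq.trans ?_ ((h z.toAdd).mul_mid_last (h w.toAdd) i).symm
      simp [heisElem, heisMatrix_mid_last]
    · refine Eq.trans ?_ ((h z.toAdd).mul_zero_last (h w.toAdd)).symm
      simp [heisElem, heisMatrix_zero_last, heisMatrix_zero_mid, add_comm]

lemma heisElem_zpow (t : ℤ) : heisElem H hH 0 0 1 ^ t = heisElem H hH 0 0 t := by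
  have h := map_zpow (heisCenter H hH) (Multiplicative.ofAdd 1) t
  rw [← ofAdd_zsmul, smul_eq_mul, mul_one] at h
  exact h.symm

lemma heis_comm (g h : H) :
    g * h = heisElem H hH 0 0 1 ^ symp (heisProj H hH g).toAdd (heisProj H hH h).toAdd *
      (h * g) := by
  rw [heisElem_zpow]
  have hg := (hH g.1).1 g.2
  have hh := (hH h.1).1 h.2
  have hhg := (hH (h * g).1).1 (h * g).2
  have hz (z : ℤ) := isHeis_heisMatrix (0 : Fin m → ℤ) 0 z
  refine heisElem_ext H hH (fun i => ?_) (fun i => ?_) ?_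
  · refine (hg.mul_zero_mid hh i).trans (((hz _).mul_zero_mid hhg i).trans ?_).symm
    refine (congrArg _ (hh.mul_zero_mid hg i)).trans ?_
    rw [heisMatrix_zero_mid, Pi.zero_apply]
    ring
  · refine (hg.mul_mid_last hh i).trans (((hz _).mul_mid_last hhg i).trans ?_).symm
    refine (congrArg _ (hh.mul_mid_last hg i)).trans ?_
    rw [heisMatrix_mid_last, Pi.zero_apply]
    ring
  · refine (hg.mul_zero_last hh).trans (((hz _).mul_zero_last hhg).trans ?_).symm
    simp only [heisMatrix_zero_mid, heisMatrix_zero_last, Pi.zero_apply, zero_mul,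
      Finset.sum_const_zero, add_zero]
    refine (congrArg (· + _) (hh.mul_zero_last hg)).trans ?_
    simp only [symp, dotProduct, heisProj, MonoidHom.mk'_apply, toAdd_ofAdd]
    ring

end HeisGroup


/-- **Lemma 4.1** (lower bound in the generalized Heisenberg group): fix `k ≥ 3` and let
`H ≤ SL_k(ℤ)` be the generalized Heisenberg subgroup, consisting of all upper unitriangular
integer matrices whose off-diagonal entries vanish except possibly those in the first row
and in the last column. For `n ≥ 1` let `g_n = E_{1,k}(lcm(1,…,n))`. Then every
finite-index subgroup `Δ ≤ H` with `g_n ∉ Δ` satisfies `[H : Δ] ≥ n^(k-1)`. -/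
theorem heisenberg_divisibility_lower_bound
    (k : ℕ) (hk : 3 ≤ k)
    (H : Subgroup (Matrix.SpecialLinearGroup (Fin k) ℤ))
    (hH : ∀ g : Matrix.SpecialLinearGroup (Fin k) ℤ, g ∈ H ↔
      ((∀ i : Fin k, (g : Matrix (Fin k) (Fin k) ℤ) i i = 1) ∧
        ∀ i j : Fin k, i ≠ j → i ≠ ⟨0, by omega⟩ → j ≠ ⟨k - 1, by omega⟩ →
          (g : Matrix (Fin k) (Fin k) ℤ) i j = 0))
    (n : ℕ) (hn : 1 ≤ n) (gn : ↥H)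
    (hgn : ((gn : Matrix.SpecialLinearGroup (Fin k) ℤ) : Matrix (Fin k) (Fin k) ℤ) =
      Matrix.transvection ⟨0, by omega⟩ ⟨k - 1, by omega⟩
        ((((Finset.Icc 1 n).lcm id : ℕ)) : ℤ))
    (Δ : Subgroup ↥H) (hΔfi : Δ.FiniteIndex) (hgnΔ : gn ∉ Δ) :
    n ^ (k - 1) ≤ Δ.index := by
  obtain ⟨m, rfl⟩ : ∃ m, k = m + 2 := ⟨k - 2, by omega⟩
  have hH' : ∀ g, g ∈ H ↔ IsHeis g.1 := hH
  have hgn' : gn = heisElem H hH' 0 0 1 ^ (((Finset.Icc 1 n).lcm id : ℕ) : ℤ) := by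
    rw [heisElem_zpow]
    exact Subtype.ext (Subtype.ext (hgn.trans (transvection_eq_heisMatrix _)))
  have hc : heisProj H hH' (heisElem H hH' 0 0 1) = 1 :=
    heisProj_heisElem H hH' 0 0 1
  refine le_trans ?_ (relIndex_pow_le_index _ (heisProj H hH') (heisProj_surjective H hH') hc
    (heis_comm H hH') Δ)
  rw [hgn', zpow_mem_iff_relIndex_dvd, Int.natCast_dvd_natCast] at hgnΔ
  -- It remains to see that a positive integer not dividing `lcm(1, …, n)` exceeds `n`.
  refine Nat.pow_le_pow_left ?_ (m + 1)
  by_contra! hlt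
  refine hgnΔ (Finset.dvd_lcm (f := id) (Finset.mem_Icc.mpr ⟨?_, hlt.le⟩))
  exact Nat.one_le_iff_ne_zero.mpr 
    Subgroup.isFiniteRelIndex_of_finiteIndex.relIndex_ne_zero
end
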